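/- Let A be an abelian category with enough projective objects, equipped with a C₂-action (T, u). Then the category A^{(T,u)} of C₂-equivariant objects has enough projective objects: for every equivariant object (Y, β) there exist a projective object Q of A^{(T,u)} and an epimorphism Q → (Y, β). Concretely, if π : P → Y is an epimorphism in A with P projective, then the morphism with components (π, β^{-1} ∘ T(π)) : Ind(P) → (Y, β) is such an epimorphism from a projective object. -/

import Mathlib

/-!
`Ind` is both left and right adjoint to the forgetful functor `U`. As a right adjoint to `U` it
forces `U` to preserve epimorphisms (`C2Action.epi_val`): a morphism `g : N.X ⟶ Z` corresponds to
`(g, T(g) ∘ α) : N ⟶ Ind(Z)`, which allows cancellation to be tested in the equivariant category.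
As a left adjoint, `Ind` then preserves projectives: a morphism `φ : Ind(P) ⟶ N` is determined by
its restriction to `P` (`C2Action.eq_descHom`), and that restriction lifts along the underlying
epimorphism in `C`. Finally `(π, β⁻¹ ∘ T(π))` is an epimorphism because its first component is and
`U` is faithful.
-/

open CategoryTheory CategoryTheory.Limits

universe v u

/-- A `C₂`-action on a category `C`: an autoequivalence `T` together with a natural
isomorphism `u : Id_C ≅ T ⋙ T` satisfying `Tu = uT`. -/
structure C2Action (C : Type u) [Category.{v} C] where
  T : C ⥤ C
  isEquiv : T.IsEquivalence
  u : Functor.id C ≅ T ⋙ T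
  compat : ∀ X : C, T.map (u.hom.app X) = u.hom.app (T.obj X)

variable {C : Type u} [Category.{v} C]

/-- A `C₂`-equivariant object: `(X, α)` with `α : X ≅ T X` such that `T(α) ∘ α = u_X`. -/
structure EquivObj (A : C2Action C) where
  X : C
  α : X ≅ A.T.obj X
  cond : α.hom ≫ A.T.map α.hom = A.u.hom.app X

/-- A morphism of `C₂`-equivariant objects: `f : X ⟶ Y` with `β ∘ f = T(f) ∘ α`. -/
@[ext]
structure EquivHom {A : C2Action C} (M N : EquivObj A) where
  val : M.X ⟶ N.X
  comm : val ≫ N.α.hom = M.α.hom ≫ A.T.map val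

/-- The category of `C₂`-equivariant objects. -/
instance (A : C2Action C) : Category (EquivObj A) where
  Hom := EquivHom
  id M := ⟨𝟙 M.X, by simp⟩
  comp {M N P} f g := ⟨f.val ≫ g.val, by
    rw [Category.assoc, g.comm, ← Category.assoc, f.comm, Category.assoc, ← Functor.map_comp]⟩
  id_comp f := EquivHom.ext (Category.id_comp _)
  comp_id f := EquivHom.ext (Category.comp_id _)
  assoc f g h := EquivHom.ext (Category.assoc _ _ _)

@[simp] lemma EquivObj.comp_val {A : C2Action C} {M N P : EquivObj A} (f : M ⟶ N) (g : N ⟶ P) :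
    (f ≫ g).val = f.val ≫ g.val := rfl

@[simp] lemma EquivObj.id_val {A : C2Action C} (M : EquivObj A) :
    EquivHom.val (𝟙 M) = 𝟙 M.X := rfl

/-- The forgetful functor `U : C^{(T,u)} ⟶ C`, sending `(X, α)` to `X`. -/
def C2Action.forget (A : C2Action C) : EquivObj A ⥤ C where
  obj M := M.X
  map f := f.val
  map_id _ := rfl
  map_comp _ _ := rfl

section Additive

variable [Preadditive C] [HasBinaryBiproducts C]

/-- The equivariant object `Ind(X) = (X ⊕ T X, ((0, 1), (u_X, 0)))`, where the isomorphism
`X ⊕ T X ≅ T (X ⊕ T X)` is written with respect to the canonical identification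
`T (X ⊕ T X) ≅ T X ⊕ T² X`. -/
noncomputable def C2Action.indObj (A : C2Action C) [A.T.Additive] (X : C) : EquivObj A where
  X := X ⊞ A.T.obj X
  α :=
    { hom := biprod.desc (A.u.hom.app X ≫ A.T.map biprod.inr) (A.T.map biprod.inl)
      inv := biprod.lift (A.T.map biprod.snd ≫ A.u.inv.app X) (A.T.map biprod.fst)
      hom_inv_id := by
        apply biprod.hom_ext' <;> apply biprod.hom_ext <;>
          simp [← Functor.map_comp, ← Functor.map_comp_assoc]
      inv_hom_id := by
        rw [biprod.lift_desc, Category.assoc, ← Category.assoc (A.u.inv.app X),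
          Iso.inv_hom_id_app, Category.id_comp, ← Functor.map_comp, ← Functor.map_comp,
          ← Functor.map_add]
        have tot : (biprod.snd ≫ biprod.inr : X ⊞ A.T.obj X ⟶ _) + biprod.fst ≫ biprod.inl
            = 𝟙 _ := by
          rw [add_comm]; exact biprod.total
        rw [tot]
        exact A.T.map_id _ }
  cond := by
    apply biprod.hom_ext'
    · rw [← Category.assoc, biprod.inl_desc, Category.assoc, ← Functor.map_comp, biprod.inr_desc]
      have nat := A.u.hom.naturality (biprod.inl : X ⟶ X ⊞ A.T.obj X)
      simp only [Functor.id_map, Functor.comp_map] at nat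
      rw [← nat]
    · rw [← Category.assoc, biprod.inr_desc, ← Functor.map_comp, biprod.inl_desc]
      have nat := A.u.hom.naturality (biprod.inr : A.T.obj X ⟶ X ⊞ A.T.obj X)
      simp only [Functor.id_map, Functor.comp_map] at nat
      rw [Functor.map_comp, A.compat X, ← nat]

/-- The induction functor `Ind : C ⟶ C^{(T,u)}`, with `Ind(X) = (X ⊕ T X, ((0,1),(u_X,0)))`
and `Ind(f) = f ⊕ T(f)`. -/
noncomputable def C2Action.Ind (A : C2Action C) [A.T.Additive] : C ⥤ EquivObj A where
  obj X := A.indObj X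
  map {X Y} f :=
    { val := biprod.map f (A.T.map f)
      comm := by
        have nat := A.u.hom.naturality f
        simp only [Functor.id_map, Functor.comp_map] at nat
        apply biprod.hom_ext'
        · simp only [C2Action.indObj, biprod.inl_map_assoc, biprod.inl_desc,
            biprod.inl_desc_assoc, Category.assoc, ← Functor.map_comp, biprod.inr_map]
          rw [Functor.map_comp, reassoc_of% nat]
        · simp [C2Action.indObj, ← Functor.map_comp, ← Functor.map_comp_assoc] }
  map_id X := by
    apply EquivHom.ext
    apply biprod.hom_ext' <;> simp [C2Action.indObj]
  map_comp f g := by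
    apply EquivHom.ext
    apply biprod.hom_ext' <;> simp [C2Action.indObj]

/-- The morphism `Ind(X) ⟶ (Y, β)` with components `f : X ⟶ Y` and
`β⁻¹ ∘ T(f) : T(X) ⟶ Y` associated to a morphism `f : X ⟶ Y`. -/
noncomputable def C2Action.descHom (A : C2Action C) [A.T.Additive] {X : C} {N : EquivObj A}
    (f : X ⟶ N.X) : A.indObj X ⟶ N where
  val := biprod.desc f (A.T.map f ≫ N.α.inv)
  comm := by
    have nat := A.u.hom.naturality f
    simp only [Functor.id_map, Functor.comp_map] at nat
    have hβ : N.α.hom = A.u.hom.app N.X ≫ A.T.map N.α.inv := by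
      rw [← N.cond, Category.assoc, ← Functor.map_comp, N.α.hom_inv_id,
        CategoryTheory.Functor.map_id, Category.comp_id]
    show biprod.desc f (A.T.map f ≫ N.α.inv) ≫ N.α.hom
        = biprod.desc (A.u.hom.app X ≫ A.T.map biprod.inr) (A.T.map biprod.inl) ≫
          A.T.map (biprod.desc f (A.T.map f ≫ N.α.inv))
    apply biprod.hom_ext'
    · rw [← Category.assoc, biprod.inl_desc, ← Category.assoc, biprod.inl_desc, Category.assoc,
        ← Functor.map_comp, biprod.inr_desc, Functor.map_comp, ← Category.assoc, ← nat,
        Category.assoc, ← hβ]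
    · rw [← Category.assoc, biprod.inr_desc, ← Category.assoc, biprod.inr_desc,
        ← Functor.map_comp, biprod.inl_desc, Category.assoc, N.α.inv_hom_id, Category.comp_id]

end Additive

/-- The morphism `(g, T(g) ∘ α) : N ⟶ Ind(Z)` associated to `g : N.X ⟶ Z`, exhibiting `Ind` as a
right adjoint of the forgetful functor. -/
noncomputable def C2Action.liftHom [Preadditive C] [HasBinaryBiproducts C] (A : C2Action C)
    [A.T.Additive] {N : EquivObj A} {Z : C} (g : N.X ⟶ Z) : N ⟶ A.indObj Z where
  val := biprod.lift g (N.α.hom ≫ A.T.map g)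
  comm := by
    have nat := A.u.hom.naturality g
    simp only [Functor.id_map, Functor.comp_map] at nat
    have key : biprod.lift g (N.α.hom ≫ A.T.map g) =
        g ≫ biprod.inl + (N.α.hom ≫ A.T.map g) ≫ biprod.inr := by
      apply biprod.hom_ext <;> simp
    change biprod.lift g (N.α.hom ≫ A.T.map g) ≫
        biprod.desc (A.u.hom.app Z ≫ A.T.map biprod.inr) (A.T.map biprod.inl) =
      N.α.hom ≫ A.T.map (biprod.lift g (N.α.hom ≫ A.T.map g))
    rw [biprod.lift_desc, key, Functor.map_add, Preadditive.comp_add, add_comm]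
    congr 1
    · simp
    · rw [reassoc_of% nat, ← N.cond]
      simp

/-- The forgetful functor preserves epimorphisms. -/
lemma C2Action.epi_val [Preadditive C] [HasBinaryBiproducts C] (A : C2Action C)
    [A.T.Additive] {M N : EquivObj A} (e : M ⟶ N) [Epi e] : Epi e.val where
  left_cancellation {Z} g h w := by
    have hlift : e ≫ A.liftHom g = e ≫ A.liftHom h := by
      apply EquivHom.ext
      change e.val ≫ biprod.lift g (N.α.hom ≫ A.T.map g) =
        e.val ≫ biprod.lift h (N.α.hom ≫ A.T.map h)
      apply biprod.hom_ext
      · simpa using w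
      · simp only [Category.assoc, biprod.lift_snd]
        rw [reassoc_of% e.comm, reassoc_of% e.comm, ← Functor.map_comp, ← Functor.map_comp, w]
    have hval : biprod.lift g (N.α.hom ≫ A.T.map g) = biprod.lift h (N.α.hom ≫ A.T.map h) :=
      congrArg EquivHom.val ((cancel_epi e).1 hlift)
    simpa using congrArg (fun k => k ≫ biprod.fst) hval

/-- A morphism out of `Ind(X)` is determined by its restriction to `X`: this is the uniqueness
half of the adjunction between `Ind` and the forgetful functor. -/
lemma C2Action.eq_descHom [Preadditive C] [HasBinaryBiproducts C] (A : C2Action C)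
    [A.T.Additive] {X : C} {N : EquivObj A} (φ : A.indObj X ⟶ N) (f : X ⟶ N.X)
    (hf : (biprod.inl : X ⟶ X ⊞ A.T.obj X) ≫ φ.val = f) : φ = A.descHom f := by
  apply EquivHom.ext
  -- Restating `φ.comm` with domain `X ⊞ T X` exposes the biproduct behind `(A.indObj X).X`.
  have aux : ∀ (k : X ⊞ A.T.obj X ⟶ N.X), biprod.inl ≫ k = f →
      k ≫ N.α.hom =
        biprod.desc (A.u.hom.app X ≫ A.T.map biprod.inr) (A.T.map biprod.inl) ≫ A.T.map k →
      k = biprod.desc f (A.T.map f ≫ N.α.inv) := by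
    intro k hk hc
    apply biprod.hom_ext'
    · rw [biprod.inl_desc, hk]
    · rw [biprod.inr_desc, ← cancel_mono N.α.hom, Category.assoc, Category.assoc,
        N.α.inv_hom_id, Category.comp_id, hc, biprod.inr_desc_assoc, ← hk, Functor.map_comp]
  exact aux φ.val hf φ.comm

lemma C2Action.projective_indObj [Preadditive C] [HasBinaryBiproducts C] (A : C2Action C)
    [A.T.Additive] (P : C) [Projective P] : Projective (A.indObj P) where
  factors {M N} φ e he := by
    have := A.epi_val e
    let f : P ⟶ N.X := (biprod.inl : P ⟶ P ⊞ A.T.obj P) ≫ φ.val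
    refine ⟨A.descHom (Projective.factorThru f e.val), ?_⟩
    rw [A.eq_descHom φ f rfl]
    apply A.eq_descHom
    change biprod.inl ≫ biprod.desc _ _ ≫ e.val = f
    rw [biprod.inl_desc_assoc, Projective.factorThru_comp]

lemma C2Action.epi_descHom [Preadditive C] [HasBinaryBiproducts C] (A : C2Action C)
    [A.T.Additive] {P : C} {N : EquivObj A} (π : P ⟶ N.X) [Epi π] : Epi (A.descHom π) where
  left_cancellation g h w := by
    apply EquivHom.ext
    have hval : biprod.desc π (A.T.map π ≫ N.α.inv) ≫ g.val =
        biprod.desc π (A.T.map π ≫ N.α.inv) ≫ h.val := congrArg EquivHom.val w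
    rw [← cancel_epi π]
    simpa using congrArg (fun k => biprod.inl ≫ k) hval

/-- Let `A` be an abelian category with enough projective objects, equipped
with a `C₂`-action `(T, u)`. Then the category of `C₂`-equivariant objects has enough
projective objects; concretely, if `π : P ⟶ Y` is an epimorphism in `A` with `P` projective,
then the morphism with components `(π, β⁻¹ ∘ T(π)) : Ind(P) ⟶ (Y, β)` is an epimorphism
from a projective object. -/
theorem C2Action.enoughProjectives_equivObj
    {C : Type u} [Category.{v} C] [Abelian C] [EnoughProjectives C]
    (A : C2Action C) [A.T.Additive] :
    EnoughProjectives (EquivObj A) ∧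
      ∀ (N : EquivObj A) (P : C) (π : P ⟶ N.X), Projective P → Epi π →
        Projective (A.indObj P) ∧ Epi (A.descHom π) := by
  have main : ∀ (N : EquivObj A) (P : C) (π : P ⟶ N.X), Projective P → Epi π →
      Projective (A.indObj P) ∧ Epi (A.descHom π) := fun N P π _ _ =>
    ⟨A.projective_indObj P, A.epi_descHom π⟩
  refine ⟨⟨fun N => ?_⟩, main⟩
  obtain ⟨hP, hE⟩ := main N (Projective.over N.X) (Projective.π N.X) inferInstance inferInstance
  exact ⟨{ p := A.indObj (Projective.over N.X), f := A.descHom (Projective.π N.X),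
           projective := hP, epi := hE }⟩
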